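/- Sufficiency for Morrey boundedness: If 1 < p < q < ∞ and ω ∈ A_p(ℤ), then the discrete Hardy–Littlewood maximal operator M is bounded on the discrete weighted Morrey space l^p_q(ω): ‖Mx‖_{l^p_q(ω)} ≤ C‖x‖_{l^p_q(ω)}. -/

import Mathlib

open Finset MeasureTheory
open scoped Classical

noncomputable section

/-- The symmetric interval `S_{m,N} = {k : |k - m| ≤ N}` as a finite set. -/
def Sint (m : ℤ) (N : ℕ) : Finset ℤ := Finset.Icc (m - N) (m + N)

/-- `w(S) = Σ_{k ∈ S} w(k)`. -/
def wSum (w : ℤ → ℝ) (s : Finset ℤ) : ℝ := ∑ k ∈ s, w k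

/-- Discrete weighted Morrey norm `‖x‖_{l^p_q(w,v)}`. -/
def morreyNorm (p q : ℝ) (w v : ℤ → ℝ) (x : ℤ → ℝ) : ℝ :=
  ⨆ mN : ℤ × ℕ, (wSum v (Sint mN.1 mN.2)) ^ (1/q - 1/p) *
    (∑ k ∈ Sint mN.1 mN.2, |x k| ^ p * w k) ^ (1/p)

/-- The discrete Muckenhoupt class `A₁(ℤ)`. -/
def discreteA1 (w : ℤ → ℝ) : Prop :=
  ∃ C : ℝ, ∀ a b : ℤ, (hab : a ≤ b) →
    ((Finset.Icc a b).card : ℝ)⁻¹ * (∑ k ∈ Finset.Icc a b, w k) ≤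
      C * (Finset.Icc a b).inf' (Finset.nonempty_Icc.mpr hab) w

/-- The discrete Muckenhoupt class `A_p(ℤ)` for `1 < p < ∞`. -/
def discreteAp (p : ℝ) (w : ℤ → ℝ) : Prop :=
  ∃ C : ℝ, ∀ a b : ℤ, a ≤ b →
    (((Finset.Icc a b).card : ℝ)⁻¹ * ∑ k ∈ Finset.Icc a b, w k) *
      (((Finset.Icc a b).card : ℝ)⁻¹ *
        ∑ k ∈ Finset.Icc a b, (w k) ^ (-(p-1)⁻¹)) ^ (p-1) ≤ C

/-- The discrete weighted Hardy–Littlewood maximal operator `M_w`. -/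
def maxW (w x : ℤ → ℝ) (m : ℤ) : ℝ :=
  ⨆ N : ℕ, (wSum w (Sint m N))⁻¹ * ∑ k ∈ Sint m N, |x k| * w k

/-- The discrete (unweighted) Hardy–Littlewood maximal operator `M`. -/
def maxHL (x : ℤ → ℝ) (m : ℤ) : ℝ :=
  ⨆ N : ℕ, ((2 * N + 1 : ℕ) : ℝ)⁻¹ * ∑ k ∈ Sint m N, |x k|

/-!
For every positive weight `u`, the uncentred maximal function over the subintervals of a fixed
interval, with averages taken with respect to `u`, is bounded on `ℓ^r(u)` with constant `2 r'`
whatever `u` is: its one-sided halves satisfy a weak type inequality by the rising sun lemma, and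
the layer cake formula with Hölder's inequality turns weak type into strong type. Writing
`σ = ω^{-1/(p-1)}`, the `A_p` condition gives Lerner's pointwise bound
`M f ≤ (C M_ω(M_σ(f/σ)^{p-1} ω⁻¹))^{1/(p-1)}`; applying the weighted estimates for `σ` on `ℓ^p` and
for `ω` on `ℓ^{p'}` yields Muckenhoupt's inequality, uniformly over the localizing intervals.

On a ball `S = S_{m,N}`, averages of `|x|` over radii at most `N` only see the doubled ball
`S_{m,2N}`, where Muckenhoupt's inequality and doubling of `ω` apply. Averages over larger radii are
comparable to averages over balls centred at `m`, which `A_p` bounds by `C^{1/p} ‖x‖ ω(S)^{-1/q}`;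
the `ℓ^p(ω)` norm of this constant on `S` is `C^{1/p} ‖x‖ ω(S)^{1/p-1/q}`.
-/

section WeightedNorm

variable {ι : Type*} {p : ℝ} {w f g : ι → ℝ} {s t : Finset ι}

/-- The weighted `ℓ^p` norm of `f` on the finite set `s`. -/
def weightedLpNorm (p : ℝ) (w f : ι → ℝ) (s : Finset ι) : ℝ :=
  (∑ k ∈ s, |f k| ^ p * w k) ^ (1 / p)

theorem sum_abs_rpow_mul_nonneg (hw : ∀ k, 0 ≤ w k) : 0 ≤ ∑ k ∈ s, |f k| ^ p * w k :=
  Finset.sum_nonneg fun k _ => mul_nonneg (Real.rpow_nonneg (abs_nonneg _) _) (hw k)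

theorem weightedLpNorm_nonneg (hw : ∀ k, 0 ≤ w k) : 0 ≤ weightedLpNorm p w f s :=
  Real.rpow_nonneg (sum_abs_rpow_mul_nonneg hw) _

theorem weightedLpNorm_rpow (hp : p ≠ 0) (hw : ∀ k, 0 ≤ w k) :
    weightedLpNorm p w f s ^ p = ∑ k ∈ s, |f k| ^ p * w k := by
  rw [weightedLpNorm, one_div, Real.rpow_inv_rpow (sum_abs_rpow_mul_nonneg hw) hp]

theorem weightedLpNorm_mono (hp : 0 ≤ p) (hw : ∀ k, 0 ≤ w k) (h : ∀ k ∈ s, |f k| ≤ |g k|) :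
    weightedLpNorm p w f s ≤ weightedLpNorm p w g s := by
  refine Real.rpow_le_rpow (sum_abs_rpow_mul_nonneg hw) (Finset.sum_le_sum fun k hk => ?_)
    (one_div_nonneg.2 hp)
  exact mul_le_mul_of_nonneg_right (Real.rpow_le_rpow (abs_nonneg _) (h k hk) hp) (hw k)

theorem weightedLpNorm_mono_set (hp : 0 ≤ p) (hw : ∀ k, 0 ≤ w k) (hst : s ⊆ t) :
    weightedLpNorm p w f s ≤ weightedLpNorm p w f t :=
  Real.rpow_le_rpow (sum_abs_rpow_mul_nonneg hw)
    (Finset.sum_le_sum_of_subset_of_nonneg hst fun k _ _ =>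
      mul_nonneg (Real.rpow_nonneg (abs_nonneg _) _) (hw k))
    (one_div_nonneg.2 hp)

theorem weightedLpNorm_const_mul (hp : p ≠ 0) (hw : ∀ k, 0 ≤ w k) (c : ℝ) :
    weightedLpNorm p w (fun k => c * f k) s = |c| * weightedLpNorm p w f s := by
  have hsum : ∑ k ∈ s, |c * f k| ^ p * w k = |c| ^ p * ∑ k ∈ s, |f k| ^ p * w k := by
    simp only [abs_mul, Real.mul_rpow (abs_nonneg _) (abs_nonneg _), Finset.mul_sum, mul_assoc]
  rw [weightedLpNorm, hsum, Real.mul_rpow (by positivity) (sum_abs_rpow_mul_nonneg hw), one_div,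
    Real.rpow_rpow_inv (abs_nonneg c) hp, weightedLpNorm, one_div]

theorem weightedLpNorm_const (hp : p ≠ 0) (hw : ∀ k, 0 ≤ w k) (c : ℝ) :
    weightedLpNorm p w (fun _ => c) s = |c| * (∑ k ∈ s, w k) ^ (1 / p) := by
  simpa [weightedLpNorm] using weightedLpNorm_const_mul (f := fun _ => 1) (s := s) hp hw c

theorem weightedLpNorm_add_le (hp : 1 ≤ p) (hw : ∀ k, 0 ≤ w k) :
    weightedLpNorm p w (fun k => f k + g k) s ≤
      weightedLpNorm p w f s + weightedLpNorm p w g s := by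
  have habs (u : ℝ) (k : ι) : |u * w k ^ p⁻¹| ^ p = |u| ^ p * w k := by
    rw [abs_mul, abs_of_nonneg (Real.rpow_nonneg (hw k) _),
      Real.mul_rpow (abs_nonneg u) (Real.rpow_nonneg (hw k) _),
      Real.rpow_inv_rpow (hw k) (by positivity)]
  simpa only [weightedLpNorm, ← add_mul, habs] using
    Real.Lp_add_le s (fun k => f k * w k ^ p⁻¹) (fun k => g k * w k ^ p⁻¹) hp

theorem weightedLpNorm_abs_rpow {a : ℝ} (hp : p ≠ 0) (ha : a ≠ 0) (hw : ∀ k, 0 ≤ w k) :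
    weightedLpNorm p w (fun k => |f k| ^ a) s = weightedLpNorm (p * a) w f s ^ a := by
  have hsum : ∑ k ∈ s, |(|f k| ^ a)| ^ p * w k = ∑ k ∈ s, |f k| ^ (p * a) * w k := by
    refine Finset.sum_congr rfl fun k _ => ?_
    rw [abs_of_nonneg (Real.rpow_nonneg (abs_nonneg _) _), ← Real.rpow_mul (abs_nonneg _),
      mul_comm a p]
  rw [weightedLpNorm, hsum, weightedLpNorm, ← Real.rpow_mul (sum_abs_rpow_mul_nonneg hw)]
  congr 1
  field_simp

theorem sum_mul_abs_rpow_sub_one_le (hp : 1 < p) (hw : ∀ k, 0 ≤ w k) :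
    ∑ k ∈ s, |g k| ^ (p - 1) * (|f k| * w k) ≤
      weightedLpNorm p w g s ^ (p - 1) * weightedLpNorm p w f s := by
  have hp0 : p ≠ 0 := by positivity
  have hp1 : p - 1 ≠ 0 := by linarith
  have hmul (k : ι) : |g k| ^ (p - 1) * (|f k| * w k) = |g k| ^ p * w k * (|f k| / |g k|) := by
    rcases (abs_nonneg (g k)).eq_or_lt' with hg | hg
    · simp [hg, Real.zero_rpow hp1]
    · rw [Real.rpow_sub_one hg.ne']
      field_simp
  have hle (k : ι) : |g k| ^ p * w k * (|f k| / |g k|) ^ p ≤ |f k| ^ p * w k := by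
    have := hw k
    rcases (abs_nonneg (g k)).eq_or_lt' with hg | hg
    · rw [hg, Real.zero_rpow hp0, zero_mul, zero_mul]
      positivity
    · rw [Real.div_rpow (abs_nonneg _) (abs_nonneg _)]
      exact le_of_eq (by field_simp)
  have hexp : weightedLpNorm p w g s ^ (p - 1) = (∑ k ∈ s, |g k| ^ p * w k) ^ (1 - p⁻¹) := by
    rw [weightedLpNorm, ← Real.rpow_mul (sum_abs_rpow_mul_nonneg hw)]
    congr 1
    field_simp
  rw [hexp, Finset.sum_congr rfl fun k _ => hmul k, weightedLpNorm, one_div]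
  refine (Real.inner_le_weight_mul_Lp_of_nonneg s hp.le (fun k => |g k| ^ p * w k)
    (fun k => |f k| / |g k|) (fun k => mul_nonneg (by positivity) (hw k))
    fun k => by positivity).trans ?_
  have hnonneg : 0 ≤ ∑ k ∈ s, |g k| ^ p * w k * (|f k| / |g k|) ^ p :=
    Finset.sum_nonneg fun k _ => mul_nonneg (mul_nonneg (by positivity) (hw k)) (by positivity)
  exact mul_le_mul_of_nonneg_left
    (Real.rpow_le_rpow hnonneg (Finset.sum_le_sum fun k _ => hle k) (by positivity))
    (Real.rpow_nonneg (sum_abs_rpow_mul_nonneg hw) _)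

end WeightedNorm

section WeightedAverage

variable {ι : Type*} {w f : ι → ℝ} {s t : Finset ι}

/-- The average of `|f|` over the finite set `s` with respect to the weight `w`; the average
with respect to counting measure is `weightedAvg 1 f s`. -/
def weightedAvg (w f : ι → ℝ) (s : Finset ι) : ℝ :=
  (∑ k ∈ s, |f k| * w k) / ∑ k ∈ s, w k

theorem weightedAvg_nonneg (hw : ∀ k, 0 ≤ w k) : 0 ≤ weightedAvg w f s :=
  div_nonneg (Finset.sum_nonneg fun k _ => mul_nonneg (abs_nonneg _) (hw k))
    (Finset.sum_nonneg fun k _ => hw k)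

theorem weightedAvg_one (f : ι → ℝ) (s : Finset ι) :
    weightedAvg 1 f s = (s.card : ℝ)⁻¹ * ∑ k ∈ s, |f k| := by
  simp [weightedAvg, div_eq_inv_mul]

theorem weightedAvg_mul_sum (hw : ∀ k, 0 < w k) :
    weightedAvg w f s * ∑ k ∈ s, w k = ∑ k ∈ s, |f k| * w k := by
  rcases s.eq_empty_or_nonempty with rfl | hs
  · simp
  · exact div_mul_cancel₀ _ (Finset.sum_pos (fun k _ => hw k) hs).ne'

theorem lt_weightedAvg_iff (hw : ∀ k, 0 < w k) (hs : s.Nonempty) {c : ℝ} :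
    c < weightedAvg w f s ↔ 0 < ∑ k ∈ s, (|f k| - c) * w k := by
  rw [weightedAvg, lt_div_iff₀ (Finset.sum_pos (fun k _ => hw k) hs)]
  simp only [sub_mul, Finset.sum_sub_distrib, sub_pos, Finset.mul_sum]

theorem le_weightedAvg (hw : ∀ k, 0 < w k) (hs : s.Nonempty) {c : ℝ} (hc : ∀ k ∈ s, c ≤ |f k|) :
    c ≤ weightedAvg w f s := by
  rw [weightedAvg, le_div_iff₀ (Finset.sum_pos (fun k _ => hw k) hs), Finset.mul_sum]
  exact Finset.sum_le_sum fun k hk => mul_le_mul_of_nonneg_right (hc k hk) (hw k).le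

theorem weightedAvg_le_mul_of_subset (hw : ∀ k, 0 < w k) (hst : s ⊆ t) {K : ℝ}
    (hK : ∑ k ∈ t, w k ≤ K * ∑ k ∈ s, w k) : weightedAvg w f s ≤ K * weightedAvg w f t := by
  have hw0 k := (hw k).le
  have ht := weightedAvg_nonneg (f := f) (s := t) hw0
  rcases s.eq_empty_or_nonempty with rfl | hs
  · have ht0 : ∑ k ∈ t, w k = 0 :=
      le_antisymm (by simpa using hK) (Finset.sum_nonneg fun k _ => hw0 k)
    simp [weightedAvg, ht0]
  rw [weightedAvg, div_le_iff₀ (Finset.sum_pos (fun k _ => hw k) hs)]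
  calc ∑ k ∈ s, |f k| * w k ≤ ∑ k ∈ t, |f k| * w k :=
        Finset.sum_le_sum_of_subset_of_nonneg hst fun k _ _ => mul_nonneg (abs_nonneg _) (hw0 k)
    _ = weightedAvg w f t * ∑ k ∈ t, w k := (weightedAvg_mul_sum hw).symm
    _ ≤ weightedAvg w f t * (K * ∑ k ∈ s, w k) := mul_le_mul_of_nonneg_left hK ht
    _ = K * weightedAvg w f t * ∑ k ∈ s, w k := by ring

theorem weightedAvg_union_le [DecidableEq ι] (hw : ∀ k, 0 < w k) :
    weightedAvg w f (s ∪ t) ≤ weightedAvg w f s + weightedAvg w f t := by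
  have hw0 k := (hw k).le
  have hs := weightedAvg_nonneg (f := f) (s := s) hw0
  have ht := weightedAvg_nonneg (f := f) (s := t) hw0
  refine div_le_of_le_mul₀ (Finset.sum_nonneg fun k _ => hw0 k) (by positivity) ?_
  calc ∑ k ∈ s ∪ t, |f k| * w k
      ≤ ∑ k ∈ s, |f k| * w k + ∑ k ∈ t, |f k| * w k := by
        rw [← Finset.sum_union_inter]
        exact le_add_of_nonneg_right
          (Finset.sum_nonneg fun k _ => mul_nonneg (abs_nonneg _) (hw0 k))
    _ = weightedAvg w f s * ∑ k ∈ s, w k + weightedAvg w f t * ∑ k ∈ t, w k := by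
        rw [weightedAvg_mul_sum hw, weightedAvg_mul_sum hw]
    _ ≤ weightedAvg w f s * ∑ k ∈ s ∪ t, w k + weightedAvg w f t * ∑ k ∈ s ∪ t, w k := by
        gcongr
        exacts [fun k _ _ => hw0 k, Finset.subset_union_left, fun k _ _ => hw0 k,
          Finset.subset_union_right]
    _ = (weightedAvg w f s + weightedAvg w f t) * ∑ k ∈ s ∪ t, w k := (add_mul _ _ _).symm

theorem weightedAvg_one_eq_mul (hw : ∀ k, 0 < w k) (f : ι → ℝ) (s : Finset ι) :
    weightedAvg 1 f s = weightedAvg 1 w s * weightedAvg w (fun k => f k / w k) s := by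
  have hsum : ∑ k ∈ s, |f k / w k| * w k = ∑ k ∈ s, |f k| :=
    Finset.sum_congr rfl fun k _ => by
      rw [abs_div, abs_of_pos (hw k), div_mul_cancel₀ _ (hw k).ne']
  simp only [weightedAvg_one, abs_of_pos (hw _)]
  rw [mul_assoc, mul_comm (∑ k ∈ s, w k), weightedAvg_mul_sum hw, hsum]

theorem weightedAvg_rpow_mul_sum_le {p : ℝ} (hp : 1 ≤ p) (hw : ∀ k, 0 < w k) :
    weightedAvg w f s ^ p * ∑ k ∈ s, w k ≤ ∑ k ∈ s, |f k| ^ p * w k := by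
  rcases s.eq_empty_or_nonempty with rfl | hs
  · simp
  have hpos : 0 < ∑ k ∈ s, w k := Finset.sum_pos (fun k _ => hw k) hs
  have hJensen := Real.rpow_arith_mean_le_arith_mean_rpow s (fun k => w k / ∑ j ∈ s, w j)
    (fun k => |f k|) (fun k _ => div_nonneg (hw k).le hpos.le)
    (by rw [← Finset.sum_div, div_self hpos.ne']) (fun k _ => abs_nonneg _) hp
  simpa only [weightedAvg, div_mul_eq_mul_div, ← Finset.sum_div, le_div_iff₀ hpos,
    mul_comm (w _)] using hJensen

end WeightedAverage

section LayerCake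

variable {ι : Type*} {w f g : ι → ℝ} {s : Finset ι} {r : ℝ}

theorem integrableOn_Ioi_indicator_Iio_rpow (hr : 0 < r) {M : ℝ} (hM : 0 ≤ M) :
    IntegrableOn ((Set.Iio M).indicator fun t : ℝ => t ^ (r - 1)) (Set.Ioi 0) := by
  rw [IntegrableOn, integrable_indicator_iff measurableSet_Iio, IntegrableOn,
    Measure.restrict_restrict measurableSet_Iio, Set.Iio_inter_Ioi]
  exact (intervalIntegrable_iff_integrableOn_Ioo_of_le hM).1
    (intervalIntegral.intervalIntegrable_rpow' (by linarith))

theorem setIntegral_Ioi_indicator_Iio_rpow (hr : 0 < r) {M : ℝ} (hM : 0 ≤ M) :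
    ∫ t in Set.Ioi (0 : ℝ), (Set.Iio M).indicator (fun t : ℝ => t ^ (r - 1)) t = M ^ r / r := by
  rw [setIntegral_indicator measurableSet_Iio, Set.Ioi_inter_Iio,
    ← integral_Ioc_eq_integral_Ioo, ← intervalIntegral.integral_of_le hM,
    integral_rpow (Or.inl (by linarith)), sub_add_cancel, Real.zero_rpow hr.ne', sub_zero]

theorem rpow_mul_sum_filter_lt (g w : ι → ℝ) (s : Finset ι) (r t : ℝ) :
    t ^ (r - 1) * ∑ k ∈ s with t < g k, w k =
      ∑ k ∈ s, (Set.Iio (g k)).indicator (fun t : ℝ => t ^ (r - 1)) t * w k := by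
  rw [Finset.mul_sum, Finset.sum_filter]
  simp [Set.indicator_apply, ite_mul]

theorem integrableOn_rpow_mul_sum_filter_lt (hr : 0 < r) (hg : ∀ k, 0 ≤ g k) (w : ι → ℝ) :
    IntegrableOn (fun t : ℝ => t ^ (r - 1) * ∑ k ∈ s with t < g k, w k) (Set.Ioi 0) := by
  simp only [rpow_mul_sum_filter_lt]
  exact integrable_finsetSum _ fun k _ =>
    (integrableOn_Ioi_indicator_Iio_rpow hr (hg k)).mul_const _

theorem setIntegral_rpow_mul_sum_filter_lt (hr : 0 < r) (hg : ∀ k, 0 ≤ g k) (w : ι → ℝ) :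
    ∫ t in Set.Ioi (0 : ℝ), t ^ (r - 1) * ∑ k ∈ s with t < g k, w k =
      (∑ k ∈ s, g k ^ r * w k) / r := by
  simp only [rpow_mul_sum_filter_lt]
  rw [integral_finsetSum _ fun k _ =>
    (integrableOn_Ioi_indicator_Iio_rpow hr (hg k)).mul_const _, Finset.sum_div]
  simp only [integral_mul_const, setIntegral_Ioi_indicator_Iio_rpow hr (hg _), div_mul_eq_mul_div]

theorem sum_rpow_mul_le_of_weak_type (hr : 1 < r) (hg : ∀ k, 0 ≤ g k)
    (hweak : ∀ t : ℝ, 0 < t →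
      t * ∑ k ∈ s with t < g k, w k ≤ ∑ k ∈ s with t < g k, |f k| * w k) :
    (∑ k ∈ s, g k ^ r * w k) / r ≤ (∑ k ∈ s, g k ^ (r - 1) * (|f k| * w k)) / (r - 1) := by
  have hr0 : 0 < r := by linarith
  have hr1 : 0 < r - 1 := by linarith
  rw [← setIntegral_rpow_mul_sum_filter_lt hr0 hg,
    ← setIntegral_rpow_mul_sum_filter_lt hr1 hg]
  refine setIntegral_mono_on (integrableOn_rpow_mul_sum_filter_lt hr0 hg _)
    (integrableOn_rpow_mul_sum_filter_lt hr1 hg _) measurableSet_Ioi fun t (ht : 0 < t) => ?_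
  rw [← div_mul_cancel₀ (t ^ (r - 1)) ht.ne', ← Real.rpow_sub_one ht.ne', mul_assoc]
  gcongr
  exact hweak t ht

theorem weightedLpNorm_le_of_weak_type {r' : ℝ} (hr : r.HolderConjugate r')
    (hw : ∀ k, 0 ≤ w k) (hg : ∀ k, 0 ≤ g k)
    (hweak : ∀ t : ℝ, 0 < t →
      t * ∑ k ∈ s with t < g k, w k ≤ ∑ k ∈ s with t < g k, |f k| * w k) :
    weightedLpNorm r w g s ≤ r' * weightedLpNorm r w f s := by
  have hr0 := hr.pos
  have hr1 := hr.sub_one_pos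
  have hf0 := weightedLpNorm_nonneg (p := r) (f := f) (s := s) hw
  rcases (weightedLpNorm_nonneg (p := r) (f := g) (s := s) hw).eq_or_lt' with h0 | hpos
  · rw [h0]
    exact mul_nonneg hr.symm.nonneg hf0
  have hlayer := sum_rpow_mul_le_of_weak_type hr.lt hg hweak
  have hHolder := sum_mul_abs_rpow_sub_one_le (f := f) (g := g) (s := s) hr.lt hw
  have hpow := weightedLpNorm_rpow (f := g) (s := s) hr.ne_zero hw
  simp only [abs_of_nonneg (hg _)] at hHolder hpow
  rw [← hpow, div_le_iff₀ hr0] at hlayer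
  refine le_of_mul_le_mul_left ?_ (Real.rpow_pos_of_pos hpos (r - 1))
  calc weightedLpNorm r w g s ^ (r - 1) * weightedLpNorm r w g s
      = weightedLpNorm r w g s ^ r := by
        rw [← Real.rpow_add_one hpos.ne', sub_add_cancel]
    _ ≤ weightedLpNorm r w g s ^ (r - 1) * weightedLpNorm r w f s / (r - 1) * r := by
        refine hlayer.trans ?_
        gcongr
    _ = weightedLpNorm r w g s ^ (r - 1) * (r' * weightedLpNorm r w f s) := by
        rw [hr.conjugate_eq]
        ring

end LayerCake

section IntervalSums

variable {M : Type*} [AddCommMonoid M]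

theorem sum_Icc_eq_add_sum_Icc_add_one (h : ℤ → M) {a b : ℤ} (hab : a ≤ b) :
    ∑ j ∈ Icc a b, h j = h a + ∑ j ∈ Icc (a + 1) b, h j := by
  rw [← Finset.insert_Icc_add_one_left_eq_Icc hab, Finset.sum_insert (by simp)]

theorem sum_Icc_neg (h : ℤ → M) (a b : ℤ) :
    ∑ j ∈ Icc (-b) (-a), h (-j) = ∑ j ∈ Icc a b, h j :=
  Finset.sum_equiv (Equiv.neg ℤ) (fun j => by simp [le_neg, neg_le, and_comm]) fun _ _ => rfl

end IntervalSums

section RisingSun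

variable {M : Type*} [AddCommGroup M] [LinearOrder M]

/-- The points of `[A, B]` in the shadow of the rising sun: some partial sum of `h` started there
and ending in `[A, B]` is positive. -/
def risingSunSet (h : ℤ → M) (A B : ℤ) : Finset ℤ :=
  {k ∈ Icc A B | ∃ b ∈ Icc k B, 0 < ∑ j ∈ Icc k b, h j}

theorem sum_risingSunSet (h : ℤ → M) {A B : ℤ} (hAB : A ≤ B) :
    ∑ k ∈ risingSunSet h A B, h k =
      (if ∃ b ∈ Icc A B, 0 < ∑ j ∈ Icc A b, h j then h A else 0) +
        ∑ k ∈ risingSunSet h (A + 1) B, h k := by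
  rw [risingSunSet, risingSunSet, Finset.sum_filter, Finset.sum_filter,
    sum_Icc_eq_add_sum_Icc_add_one _ hAB]

variable [IsOrderedAddMonoid M]

theorem sum_Icc_le_sum_risingSunSet (h : ℤ → M) {A b B : ℤ} (hb : b ≤ B) :
    ∑ j ∈ Icc A b, h j ≤ ∑ k ∈ risingSunSet h A B, h k := by
  rcases lt_or_ge B A with hBA | hAB
  · simp [risingSunSet, Finset.Icc_eq_empty_of_lt hBA, Finset.Icc_eq_empty_of_lt (hb.trans_lt hBA)]
  have ih {c : ℤ} (hc : c ≤ B) := sum_Icc_le_sum_risingSunSet h (A := A + 1) hc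
  have htail : 0 ≤ ∑ k ∈ risingSunSet h (A + 1) B, h k := by simpa using ih hAB
  have hstep {c : ℤ} (hAc : A ≤ c) (hc : c ≤ B) :
      ∑ j ∈ Icc A c, h j ≤ h A + ∑ k ∈ risingSunSet h (A + 1) B, h k := by
    rw [sum_Icc_eq_add_sum_Icc_add_one h hAc]
    exact add_le_add_right (ih hc) (h A)
  rw [sum_risingSunSet h hAB]
  split_ifs with hA
  · rcases lt_or_ge b A with hbA | hAb
    · obtain ⟨c, hc, hpos⟩ := hA
      rw [Finset.mem_Icc] at hc
      rw [Finset.Icc_eq_empty_of_lt hbA, Finset.sum_empty]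
      exact hpos.le.trans (hstep hc.1 hc.2)
    · exact hstep hAb hb
  · rw [zero_add]
    rcases lt_or_ge b A with hbA | hAb
    · rwa [Finset.Icc_eq_empty_of_lt hbA, Finset.sum_empty]
    · push Not at hA
      exact (hA b (Finset.mem_Icc.2 ⟨hAb, hb⟩)).trans htail
termination_by (B + 1 - A).toNat

theorem sum_risingSunSet_nonneg (h : ℤ → M) (A B : ℤ) :
    0 ≤ ∑ k ∈ risingSunSet h A B, h k := by
  rcases lt_or_ge B A with hBA | hAB
  · simp [risingSunSet, Finset.Icc_eq_empty_of_lt hBA]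
  · simpa using sum_Icc_le_sum_risingSunSet h (A := A) (b := A - 1) (by omega)

end RisingSun

section MaximalFunctions

variable {w f : ℤ → ℝ} {A B a b k : ℤ} {r r' : ℝ}

/-- The one-sided weighted maximal function: the supremum of the averages of `|f|` over the
intervals `[k, b]` with `b ≤ B`. It is `0` for `k > B`. -/
def rightMaximal (w f : ℤ → ℝ) (B k : ℤ) : ℝ :=
  ⨆ b : Icc k B, weightedAvg w f (Icc k b)

/-- The uncentred weighted maximal function localized to `[A, B]`: the supremum of the averages of
`|f|` over the intervals `[a, b] ⊆ [A, B]` containing `k`. It is `0` for `k ∉ [A, B]`. -/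
def localMaximal (w f : ℤ → ℝ) (A B k : ℤ) : ℝ :=
  ⨆ ab : Icc A k × Icc k B, weightedAvg w f (Icc (ab.1 : ℤ) ab.2)

theorem rightMaximal_nonneg (hw : ∀ k, 0 ≤ w k) : 0 ≤ rightMaximal w f B k :=
  Real.iSup_nonneg fun _ => weightedAvg_nonneg hw

theorem localMaximal_nonneg (hw : ∀ k, 0 ≤ w k) : 0 ≤ localMaximal w f A B k :=
  Real.iSup_nonneg fun _ => weightedAvg_nonneg hw

theorem weightedAvg_le_rightMaximal (hkb : k ≤ b) (hb : b ≤ B) :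
    weightedAvg w f (Icc k b) ≤ rightMaximal w f B k :=
  le_ciSup (f := fun b : Icc k B => weightedAvg w f (Icc k b)) (Set.finite_range _).bddAbove
    ⟨b, Finset.mem_Icc.2 ⟨hkb, hb⟩⟩

theorem weightedAvg_le_localMaximal (hA : A ≤ a) (hak : a ≤ k) (hkb : k ≤ b) (hb : b ≤ B) :
    weightedAvg w f (Icc a b) ≤ localMaximal w f A B k :=
  le_ciSup (f := fun ab : Icc A k × Icc k B => weightedAvg w f (Icc (ab.1 : ℤ) ab.2))
    (Set.finite_range _).bddAbove
    (⟨a, Finset.mem_Icc.2 ⟨hA, hak⟩⟩, ⟨b, Finset.mem_Icc.2 ⟨hkb, hb⟩⟩)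

theorem lt_rightMaximal_iff (hk : k ≤ B) {c : ℝ} :
    c < rightMaximal w f B k ↔ ∃ b ∈ Icc k B, c < weightedAvg w f (Icc k b) := by
  have : Nonempty (Icc k B) := (Finset.nonempty_Icc.2 hk).to_subtype
  rw [rightMaximal, lt_ciSup_iff (Set.finite_range _).bddAbove]
  simp only [Subtype.exists, exists_prop]

theorem filter_lt_rightMaximal (hw : ∀ k, 0 < w k) (f : ℤ → ℝ) (A B : ℤ) (c : ℝ) :
    {k ∈ Icc A B | c < rightMaximal w f B k} = risingSunSet (fun j => (|f j| - c) * w j) A B := by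
  refine Finset.filter_congr fun k hk => ?_
  rw [lt_rightMaximal_iff (Finset.mem_Icc.1 hk).2]
  refine exists_congr fun b => and_congr_right fun hb => ?_
  exact lt_weightedAvg_iff hw (Finset.nonempty_Icc.2 (Finset.mem_Icc.1 hb).1)

theorem mul_sum_filter_lt_rightMaximal_le (hw : ∀ k, 0 < w k) (f : ℤ → ℝ) (A B : ℤ) (c : ℝ) :
    c * ∑ k ∈ Icc A B with c < rightMaximal w f B k, w k ≤
      ∑ k ∈ Icc A B with c < rightMaximal w f B k, |f k| * w k := by
  have h := sum_risingSunSet_nonneg (fun j => (|f j| - c) * w j) A B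
  rw [← filter_lt_rightMaximal hw] at h
  simpa only [sub_mul, Finset.sum_sub_distrib, ← Finset.mul_sum, sub_nonneg] using h

theorem weightedLpNorm_rightMaximal_le (hr : r.HolderConjugate r') (hw : ∀ k, 0 < w k)
    (f : ℤ → ℝ) (A B : ℤ) :
    weightedLpNorm r w (rightMaximal w f B) (Icc A B) ≤ r' * weightedLpNorm r w f (Icc A B) :=
  weightedLpNorm_le_of_weak_type hr (fun k => (hw k).le)
    (fun _ => rightMaximal_nonneg fun k => (hw k).le)
    fun c _ => mul_sum_filter_lt_rightMaximal_le hw f A B c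

theorem weightedAvg_comp_neg (w f : ℤ → ℝ) (a b : ℤ) :
    weightedAvg (fun j => w (-j)) (fun j => f (-j)) (Icc (-b) (-a)) =
      weightedAvg w f (Icc a b) := by
  rw [weightedAvg, sum_Icc_neg (fun j => |f j| * w j), sum_Icc_neg w, weightedAvg]

theorem weightedLpNorm_comp_neg (p : ℝ) (w f : ℤ → ℝ) (a b : ℤ) :
    weightedLpNorm p (fun j => w (-j)) (fun j => f (-j)) (Icc (-b) (-a)) =
      weightedLpNorm p w f (Icc a b) := by
  rw [weightedLpNorm, sum_Icc_neg (fun j => |f j| ^ p * w j), weightedLpNorm]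

theorem localMaximal_le_add (hw : ∀ k, 0 < w k) (f : ℤ → ℝ) (A B k : ℤ) :
    localMaximal w f A B k ≤ rightMaximal w f B k +
      rightMaximal (fun j => w (-j)) (fun j => f (-j)) (-A) (-k) := by
  refine Real.iSup_le (fun ⟨⟨a, ha⟩, ⟨b, hb⟩⟩ => ?_) (add_nonneg
    (rightMaximal_nonneg fun k => (hw k).le) (rightMaximal_nonneg fun k => (hw (-k)).le))
  rw [Finset.mem_Icc] at ha hb
  have hunion : Icc a b = Icc k b ∪ Icc a k := by
    ext j; simp only [Finset.mem_union, Finset.mem_Icc]; omega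
  calc weightedAvg w f (Icc a b) ≤ weightedAvg w f (Icc k b) + weightedAvg w f (Icc a k) :=
        hunion ▸ weightedAvg_union_le hw
    _ ≤ _ := by
        rw [← weightedAvg_comp_neg w f a k]
        exact add_le_add (weightedAvg_le_rightMaximal hb.1 hb.2)
          (weightedAvg_le_rightMaximal (neg_le_neg ha.2) (neg_le_neg ha.1))

theorem weightedLpNorm_localMaximal_le (hr : r.HolderConjugate r') (hw : ∀ k, 0 < w k)
    (f : ℤ → ℝ) (A B : ℤ) :
    weightedLpNorm r w (localMaximal w f A B) (Icc A B) ≤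
      2 * r' * weightedLpNorm r w f (Icc A B) := by
  have hw0 k := (hw k).le
  have hright := weightedLpNorm_rightMaximal_le hr hw f A B
  have hleft := weightedLpNorm_rightMaximal_le hr (fun k => hw (-k)) (fun j => f (-j)) (-B) (-A)
  rw [weightedLpNorm_comp_neg, ← weightedLpNorm_comp_neg] at hleft
  simp only [neg_neg] at hleft
  set gl : ℤ → ℝ := fun k => rightMaximal (fun j => w (-j)) (fun j => f (-j)) (-A) (-k)
  calc weightedLpNorm r w (localMaximal w f A B) (Icc A B)
      ≤ weightedLpNorm r w (fun k => rightMaximal w f B k + gl k) (Icc A B) :=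
        weightedLpNorm_mono hr.nonneg hw0 fun k _ =>
          abs_le_abs_of_nonneg (localMaximal_nonneg hw0) (localMaximal_le_add hw f A B k)
    _ ≤ weightedLpNorm r w (rightMaximal w f B) (Icc A B) + weightedLpNorm r w gl (Icc A B) :=
        weightedLpNorm_add_le hr.lt.le hw0
    _ ≤ 2 * r' * weightedLpNorm r w f (Icc A B) := by linarith

end MaximalFunctions

section Muckenhoupt

variable {p p' C : ℝ} {w : ℤ → ℝ}

/-- The weight `ω^{-1/(p-1)}` dual to `ω` in the `A_p` condition. -/
def dualWeight (p : ℝ) (w : ℤ → ℝ) (k : ℤ) : ℝ := w k ^ (-(p - 1)⁻¹)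

/-- `C` is an admissible constant in the `A_p` condition for `w`. -/
def IsApConst (p : ℝ) (w : ℤ → ℝ) (C : ℝ) : Prop :=
  ∀ a b : ℤ, a ≤ b →
    weightedAvg 1 w (Icc a b) * weightedAvg 1 (dualWeight p w) (Icc a b) ^ (p - 1) ≤ C

theorem dualWeight_pos (hw : ∀ k, 0 < w k) (k : ℤ) : 0 < dualWeight p w k :=
  Real.rpow_pos_of_pos (hw k) _

theorem discreteAp_iff_exists_isApConst (hw : ∀ k, 0 < w k) :
    discreteAp p w ↔ ∃ C, IsApConst p w C := by
  have hσ k := abs_of_pos (dualWeight_pos (p := p) hw k)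
  simp only [discreteAp, IsApConst, weightedAvg_one, abs_of_pos (hw _), hσ]
  rfl

theorem IsApConst.one_le (hC : IsApConst p w C) (hp : 1 < p) (hw : ∀ k, 0 < w k) : 1 ≤ C := by
  have h := hC 0 0 le_rfl
  have hp1 : p - 1 ≠ 0 := by linarith
  simpa [weightedAvg, dualWeight, ← Real.rpow_mul (hw 0).le, hp1, Real.rpow_neg_one,
    abs_of_pos (hw 0), abs_of_pos (Real.rpow_pos_of_pos (hw 0) _), (hw 0).ne'] using h

theorem weightedLpNorm_div_dualWeight (hp : 1 < p) (hw : ∀ k, 0 < w k) (f : ℤ → ℝ)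
    (s : Finset ℤ) :
    weightedLpNorm p (dualWeight p w) (fun k => f k / dualWeight p w k) s =
      weightedLpNorm p w f s := by
  have hp1 : p - 1 ≠ 0 := by linarith
  have hpow (k : ℤ) : dualWeight p w k ^ p = (w k)⁻¹ * dualWeight p w k := by
    rw [dualWeight, ← Real.rpow_mul (hw k).le, ← Real.rpow_neg_one (w k), ← Real.rpow_add (hw k)]
    congr 1
    field_simp
    ring
  refine congrArg (· ^ (1 / p)) (Finset.sum_congr rfl fun k _ => ?_)
  have hσ := dualWeight_pos (p := p) hw k
  have hwk := hw k
  rw [abs_div, abs_of_pos hσ, Real.div_rpow (abs_nonneg _) hσ.le, hpow]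
  field_simp

theorem weightedLpNorm_rpow_div_weight (hp : p.HolderConjugate p') (hw : ∀ k, 0 < w k)
    (g : ℤ → ℝ) (s : Finset ℤ) :
    weightedLpNorm p' w (fun k => |g k| ^ (p - 1) / w k) s =
      weightedLpNorm p (dualWeight p w) g s ^ (p - 1) := by
  have hp1 := hp.sub_one_ne_zero
  have hsum : ∑ k ∈ s, |(|g k| ^ (p - 1) / w k)| ^ p' * w k =
      ∑ k ∈ s, |g k| ^ p * dualWeight p w k := by
    refine Finset.sum_congr rfl fun k _ => ?_
    have hexp : -(p - 1)⁻¹ = 1 - p' := by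
      rw [hp.conjugate_eq]
      field_simp
      ring
    rw [abs_of_nonneg (div_nonneg (by positivity) (hw k).le),
      Real.div_rpow (by positivity) (hw k).le, ← Real.rpow_mul (abs_nonneg _),
      hp.sub_one_mul_conj, dualWeight, hexp, Real.rpow_sub (hw k), Real.rpow_one,
      div_mul_eq_mul_div, mul_div_assoc]
  rw [weightedLpNorm, hsum, weightedLpNorm,
    ← Real.rpow_mul (sum_abs_rpow_mul_nonneg fun k => (dualWeight_pos hw k).le)]
  congr 1
  rw [hp.conjugate_eq]
  field_simp

theorem IsApConst.weightedAvg_one_rpow_mul_sum_le (hC : IsApConst p w C) (hp : 1 < p)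
    (hw : ∀ k, 0 < w k) (f : ℤ → ℝ) {a b : ℤ} (hab : a ≤ b) :
    weightedAvg 1 f (Icc a b) ^ p * ∑ k ∈ Icc a b, w k ≤
      C * ∑ k ∈ Icc a b, |f k| ^ p * w k := by
  set s := Icc a b
  set σ := dualWeight p w
  have hσ : ∀ k, 0 < σ k := dualWeight_pos hw
  have hp0 : p ≠ 0 := by positivity
  have hC0 : 0 ≤ C := zero_le_one.trans (hC.one_le hp hw)
  have hσavg : 0 ≤ weightedAvg 1 σ s := weightedAvg_nonneg fun _ => zero_le_one
  have hfavg : 0 ≤ weightedAvg σ (fun k => f k / σ k) s := weightedAvg_nonneg fun k => (hσ k).le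
  have hs : s.Nonempty := Finset.nonempty_Icc.2 hab
  have hsum (u : ℤ → ℝ) (hu : ∀ k, 0 < u k) : ∑ k ∈ s, u k = s.card * weightedAvg 1 u s := by
    simp only [weightedAvg_one, abs_of_pos (hu _)]
    rw [mul_inv_cancel_left₀ (by exact_mod_cast hs.card_pos.ne')]
  have hσpow : weightedAvg 1 σ s ^ p = weightedAvg 1 σ s ^ (p - 1) * weightedAvg 1 σ s := by
    rw [← Real.rpow_add_one' hσavg (by simpa using hp0), sub_add_cancel]
  calc weightedAvg 1 f s ^ p * ∑ k ∈ s, w k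
      = weightedAvg 1 w s * weightedAvg 1 σ s ^ (p - 1) *
          (weightedAvg σ (fun k => f k / σ k) s ^ p * ∑ k ∈ s, σ k) := by
        rw [weightedAvg_one_eq_mul hσ, Real.mul_rpow hσavg hfavg, hσpow, hsum w hw, hsum σ hσ]
        ring
    _ ≤ C * ∑ k ∈ s, |f k / σ k| ^ p * σ k :=
        mul_le_mul (hC a b hab) (weightedAvg_rpow_mul_sum_le hp.le hσ)
          (mul_nonneg (Real.rpow_nonneg hfavg _) (Finset.sum_nonneg fun k _ => (hσ k).le)) hC0
    _ = C * ∑ k ∈ s, |f k| ^ p * w k := by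
        rw [← weightedLpNorm_rpow hp0 fun k => (hσ k).le,
          weightedLpNorm_div_dualWeight hp hw, weightedLpNorm_rpow hp0 fun k => (hw k).le]

theorem IsApConst.card_div_card_rpow_mul_sum_le (hC : IsApConst p w C) (hp : 1 < p)
    (hw : ∀ k, 0 < w k) {a b : ℤ} (hab : a ≤ b) {s : Finset ℤ} (hs : s ⊆ Icc a b) :
    ((s.card : ℝ) / (Icc a b).card) ^ p * ∑ k ∈ Icc a b, w k ≤ C * ∑ k ∈ s, w k := by
  have hp0 : p ≠ 0 := by positivity
  have h := hC.weightedAvg_one_rpow_mul_sum_le hp hw (fun k => if k ∈ s then 1 else 0) hab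
  have habs (k : ℤ) : |if k ∈ s then (1 : ℝ) else 0| = if k ∈ s then 1 else 0 := by
    split_ifs <;> simp
  simpa only [weightedAvg_one, habs, ite_pow, Real.one_rpow, Real.zero_rpow hp0, ite_mul, one_mul,
    zero_mul, Finset.sum_ite_mem, Finset.inter_eq_right.2 hs, Finset.sum_const, nsmul_one,
    inv_mul_eq_div, apply_ite (· ^ p)] using h

theorem IsApConst.weightedAvg_one_rpow_sub_one_le (hC : IsApConst p w C) (hp : 1 < p)
    (hw : ∀ k, 0 < w k) {f g : ℤ → ℝ} {a b : ℤ} (hab : a ≤ b)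
    (hg : ∀ j ∈ Icc a b,
      weightedAvg (dualWeight p w) (fun i => f i / dualWeight p w i) (Icc a b) ≤ |g j|) :
    weightedAvg 1 f (Icc a b) ^ (p - 1) ≤
      C * weightedAvg w (fun j => |g j| ^ (p - 1) / w j) (Icc a b) := by
  set s := Icc a b
  set σ := dualWeight p w
  have hσ : ∀ k, 0 < σ k := dualWeight_pos hw
  have hσavg : 0 ≤ weightedAvg 1 σ s := weightedAvg_nonneg fun _ => zero_le_one
  have hfavg : 0 ≤ weightedAvg σ (fun i => f i / σ i) s := weightedAvg_nonneg fun k => (hσ k).le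
  have hgavg : weightedAvg σ (fun i => f i / σ i) s ^ (p - 1) ≤
      weightedAvg 1 (fun j => |g j| ^ (p - 1)) s := by
    refine le_weightedAvg (fun _ => one_pos) (Finset.nonempty_Icc.2 hab) fun j hj => ?_
    exact (Real.rpow_le_rpow hfavg (hg j hj) (by linarith)).trans (le_abs_self _)
  calc weightedAvg 1 f s ^ (p - 1)
      = weightedAvg 1 σ s ^ (p - 1) * weightedAvg σ (fun i => f i / σ i) s ^ (p - 1) := by
        rw [weightedAvg_one_eq_mul hσ, Real.mul_rpow hσavg hfavg]
    _ ≤ weightedAvg 1 σ s ^ (p - 1) * weightedAvg 1 (fun j => |g j| ^ (p - 1)) s := by gcongr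
    _ = weightedAvg 1 w s * weightedAvg 1 σ s ^ (p - 1) *
          weightedAvg w (fun j => |g j| ^ (p - 1) / w j) s := by
        rw [weightedAvg_one_eq_mul hw fun j => |g j| ^ (p - 1)]
        ring
    _ ≤ C * weightedAvg w (fun j => |g j| ^ (p - 1) / w j) s :=
        mul_le_mul_of_nonneg_right (hC a b hab) (weightedAvg_nonneg fun k => (hw k).le)

theorem IsApConst.localMaximal_one_le (hC : IsApConst p w C) (hp : 1 < p) (hw : ∀ k, 0 < w k)
    (f : ℤ → ℝ) (A B k : ℤ) :
    localMaximal 1 f A B k ≤ (C * localMaximal w (fun j =>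
      |localMaximal (dualWeight p w) (fun i => f i / dualWeight p w i) A B j| ^ (p - 1) / w j)
        A B k) ^ (p - 1)⁻¹ := by
  have hp1 : 0 < p - 1 := by linarith
  have hC0 : 0 ≤ C := zero_le_one.trans (hC.one_le hp hw)
  have hrhs := mul_nonneg hC0 (localMaximal_nonneg (A := A) (B := B) (k := k)
    (f := fun j => |localMaximal (dualWeight p w) (fun i => f i / dualWeight p w i) A B j| ^
      (p - 1) / w j) fun k => (hw k).le)
  refine Real.iSup_le (fun ⟨⟨a, ha⟩, ⟨b, hb⟩⟩ => ?_) (Real.rpow_nonneg hrhs _)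
  rw [Finset.mem_Icc] at ha hb
  refine (Real.le_rpow_inv_iff_of_pos (weightedAvg_nonneg fun _ => zero_le_one) hrhs hp1).2 ?_
  refine (hC.weightedAvg_one_rpow_sub_one_le hp hw (ha.2.trans hb.1) fun j hj => ?_).trans
    (mul_le_mul_of_nonneg_left (weightedAvg_le_localMaximal ha.1 ha.2 hb.1 hb.2) hC0)
  rw [Finset.mem_Icc] at hj
  exact (weightedAvg_le_localMaximal ha.1 hj.1 hj.2 hb.2).trans (le_abs_self _)

theorem IsApConst.weightedLpNorm_localMaximal_one_le (hC : IsApConst p w C)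
    (hp : p.HolderConjugate p') (hw : ∀ k, 0 < w k) (f : ℤ → ℝ) (A B : ℤ) :
    weightedLpNorm p w (localMaximal 1 f A B) (Icc A B) ≤
      (C * (2 * p)) ^ (p - 1)⁻¹ * (2 * p') * weightedLpNorm p w f (Icc A B) := by
  set s := Icc A B
  set σ := dualWeight p w
  have hσ : ∀ k, 0 < σ k := dualWeight_pos hw
  have hw0 k := (hw k).le
  have hp0 := hp.pos
  have hp1 := hp.sub_one_pos
  have hC0 : 0 ≤ C := zero_le_one.trans (hC.one_le hp.lt hw)
  set F := localMaximal σ (fun i => f i / σ i) A B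
  set G := localMaximal w (fun j => |F j| ^ (p - 1) / w j) A B
  have hG0 (k : ℤ) : 0 ≤ G k := localMaximal_nonneg hw0
  have hF0 : 0 ≤ weightedLpNorm p σ F s := weightedLpNorm_nonneg fun k => (hσ k).le
  have hF : weightedLpNorm p σ F s ≤ 2 * p' * weightedLpNorm p w f s := by
    rw [← weightedLpNorm_div_dualWeight hp.lt hw f]
    exact weightedLpNorm_localMaximal_le hp hσ _ A B
  have hG : weightedLpNorm p' w G s ≤ 2 * p * weightedLpNorm p σ F s ^ (p - 1) := by
    rw [← weightedLpNorm_rpow_div_weight hp hw]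
    exact weightedLpNorm_localMaximal_le hp.symm hw _ A B
  have hconj : p * (p - 1)⁻¹ = p' := by rw [hp.conjugate_eq, div_eq_mul_inv]
  calc weightedLpNorm p w (localMaximal 1 f A B) s
      ≤ weightedLpNorm p w (fun k => |C * G k| ^ (p - 1)⁻¹) s := by
        refine weightedLpNorm_mono hp0.le hw0 fun k _ => ?_
        refine abs_le_abs_of_nonneg (localMaximal_nonneg fun _ => zero_le_one) ?_
        rw [abs_of_nonneg (mul_nonneg hC0 (hG0 k))]
        exact hC.localMaximal_one_le hp.lt hw f A B k
    _ = (C * weightedLpNorm p' w G s) ^ (p - 1)⁻¹ := by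
        rw [weightedLpNorm_abs_rpow hp0.ne' (inv_pos.2 hp1).ne' hw0, hconj,
          weightedLpNorm_const_mul hp.symm.ne_zero hw0, abs_of_nonneg hC0]
    _ ≤ (C * (2 * p * weightedLpNorm p σ F s ^ (p - 1))) ^ (p - 1)⁻¹ := by
        have := weightedLpNorm_nonneg (p := p') (f := G) (s := s) hw0
        gcongr
    _ = (C * (2 * p)) ^ (p - 1)⁻¹ * weightedLpNorm p σ F s := by
        rw [← mul_assoc C, Real.mul_rpow (by positivity) (by positivity),
          Real.rpow_rpow_inv hF0 hp1.ne']
    _ ≤ (C * (2 * p)) ^ (p - 1)⁻¹ * (2 * p' * weightedLpNorm p w f s) := by gcongr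
    _ = (C * (2 * p)) ^ (p - 1)⁻¹ * (2 * p') * weightedLpNorm p w f s := (mul_assoc _ _ _).symm

end Muckenhoupt

section Morrey

variable {p q C c : ℝ} {w v x : ℤ → ℝ} {m k : ℤ} {N : ℕ}

theorem card_Sint (m : ℤ) (N : ℕ) : (Sint m N).card = 2 * N + 1 := by
  rw [Sint, Int.card_Icc]
  omega

theorem Sint_nonempty (m : ℤ) (N : ℕ) : (Sint m N).Nonempty :=
  Finset.card_pos.1 (by simp [card_Sint])

theorem Sint_mono {L : ℕ} (h : N ≤ L) : Sint m N ⊆ Sint m L :=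
  Finset.Icc_subset_Icc (by omega) (by omega)

theorem wSum_Sint_pos (hw : ∀ k, 0 < w k) (m : ℤ) (N : ℕ) : 0 < wSum w (Sint m N) :=
  Finset.sum_pos (fun k _ => hw k) (Sint_nonempty m N)

/-- `x` lies in the discrete Morrey space `l^p_q(w,v)`: the supremum defining its norm is finite. -/
def MemMorrey (p q : ℝ) (w v x : ℤ → ℝ) : Prop :=
  BddAbove (Set.range fun mN : ℤ × ℕ =>
    wSum v (Sint mN.1 mN.2) ^ (1 / q - 1 / p) * weightedLpNorm p w x (Sint mN.1 mN.2))

theorem rpow_mul_weightedLpNorm_Sint_le_iff (hv : ∀ k, 0 < v k) :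
    wSum v (Sint m N) ^ (1 / q - 1 / p) * weightedLpNorm p w x (Sint m N) ≤ c ↔
      weightedLpNorm p w x (Sint m N) ≤ c * wSum v (Sint m N) ^ (1 / p - 1 / q) := by
  have hpos := wSum_Sint_pos hv m N
  rw [← neg_sub (1 / p), Real.rpow_neg hpos.le,
    inv_mul_le_iff₀ (Real.rpow_pos_of_pos hpos _), mul_comm c]

theorem MemMorrey.weightedLpNorm_Sint_le (hx : MemMorrey p q w v x) (hv : ∀ k, 0 < v k)
    (m : ℤ) (N : ℕ) :
    weightedLpNorm p w x (Sint m N) ≤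
      morreyNorm p q w v x * wSum v (Sint m N) ^ (1 / p - 1 / q) :=
  (rpow_mul_weightedLpNorm_Sint_le_iff hv).1 (le_ciSup hx (m, N))

theorem memMorrey_of_le (hv : ∀ k, 0 < v k)
    (h : ∀ m N, weightedLpNorm p w x (Sint m N) ≤ c * wSum v (Sint m N) ^ (1 / p - 1 / q)) :
    MemMorrey p q w v x :=
  ⟨c, Set.forall_mem_range.2 fun mN => (rpow_mul_weightedLpNorm_Sint_le_iff hv).2 (h mN.1 mN.2)⟩

theorem morreyNorm_le (hv : ∀ k, 0 < v k)
    (h : ∀ m N, weightedLpNorm p w x (Sint m N) ≤ c * wSum v (Sint m N) ^ (1 / p - 1 / q)) :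
    morreyNorm p q w v x ≤ c :=
  ciSup_le fun mN => (rpow_mul_weightedLpNorm_Sint_le_iff hv).2 (h mN.1 mN.2)

theorem morreyNorm_nonneg (hw : ∀ k, 0 ≤ w k) (hv : ∀ k, 0 < v k) :
    0 ≤ morreyNorm p q w v x :=
  Real.iSup_nonneg fun mN =>
    mul_nonneg (Real.rpow_nonneg (wSum_Sint_pos hv mN.1 mN.2).le _) (weightedLpNorm_nonneg hw)

theorem maxHL_eq_iSup_weightedAvg (x : ℤ → ℝ) (k : ℤ) :
    maxHL x k = ⨆ L : ℕ, weightedAvg 1 x (Sint k L) := by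
  simp only [maxHL, weightedAvg_one, card_Sint]

theorem maxHL_nonneg (x : ℤ → ℝ) (k : ℤ) : 0 ≤ maxHL x k := by
  rw [maxHL_eq_iSup_weightedAvg]
  exact Real.iSup_nonneg fun _ => weightedAvg_nonneg fun _ => zero_le_one

theorem weightedAvg_one_Sint_le_two_mul {L : ℕ} (hk : k ∈ Sint m L) (x : ℤ → ℝ) :
    weightedAvg 1 x (Sint k L) ≤ 2 * weightedAvg 1 x (Sint m (2 * L)) := by
  rw [Sint, Finset.mem_Icc] at hk
  have hsub : Sint k L ⊆ Sint m (2 * L) := Finset.Icc_subset_Icc (by omega) (by omega)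
  refine weightedAvg_le_mul_of_subset (fun _ => one_pos) hsub ?_
  simp only [Finset.sum_const, card_Sint, nsmul_one]
  norm_cast
  omega

theorem maxHL_le_localMaximal_add_two_mul (hk : k ∈ Sint m N)
    (hc : ∀ L > N, weightedAvg 1 x (Sint m (2 * L)) ≤ c) :
    maxHL x k ≤ localMaximal 1 x (m - (2 * N : ℕ)) (m + (2 * N : ℕ)) k + 2 * c := by
  have hc0 : 0 ≤ c :=
    (weightedAvg_nonneg fun _ => zero_le_one).trans (hc (N + 1) N.lt_succ_self)
  have hlocal : 0 ≤ localMaximal 1 x (m - (2 * N : ℕ)) (m + (2 * N : ℕ)) k :=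
    localMaximal_nonneg fun _ => zero_le_one
  rw [maxHL_eq_iSup_weightedAvg]
  refine Real.iSup_le (fun L => ?_) (by positivity)
  rcases le_or_gt L N with hLN | hNL
  · rw [Sint, Finset.mem_Icc] at hk
    exact (weightedAvg_le_localMaximal (by omega) (by omega) (by omega) (by omega)).trans
      (le_add_of_nonneg_right (by positivity))
  · have hfar := weightedAvg_one_Sint_le_two_mul (Sint_mono hNL.le hk) x
    linarith [hc L hNL]

theorem IsApConst.wSum_Sint_two_mul_le (hC : IsApConst p w C) (hp : 1 < p) (hw : ∀ k, 0 < w k)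
    (m : ℤ) (N : ℕ) : wSum w (Sint m (2 * N)) ≤ 2 ^ p * C * wSum w (Sint m N) := by
  have hcard : (1 / 2 : ℝ) ≤ (Sint m N).card / (Sint m (2 * N)).card := by
    rw [card_Sint, card_Sint, div_le_div_iff₀ (by positivity) (by positivity)]
    norm_cast
    omega
  have hle := hC.card_div_card_rpow_mul_sum_le hp hw (by omega)
    (Sint_mono (m := m) (Nat.le_mul_of_pos_left N two_pos))
  calc wSum w (Sint m (2 * N))
      = 2 ^ p * ((1 / 2) ^ p * wSum w (Sint m (2 * N))) := by
        rw [← mul_assoc, ← Real.mul_rpow two_pos.le (by positivity)]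
        norm_num
    _ ≤ 2 ^ p * (C * wSum w (Sint m N)) := by
        have := (wSum_Sint_pos hw m (2 * N)).le
        refine mul_le_mul_of_nonneg_left (le_trans ?_ hle) (by positivity)
        exact mul_le_mul_of_nonneg_right
          (Real.rpow_le_rpow (by positivity) hcard (by positivity)) this
    _ = 2 ^ p * C * wSum w (Sint m N) := (mul_assoc _ _ _).symm

theorem IsApConst.wSum_Sint_two_mul_rpow_le (hC : IsApConst p w C) (hp : 1 < p)
    (hw : ∀ k, 0 < w k) {a : ℝ} (ha : 0 ≤ a) (hap : a ≤ 1 / p) (m : ℤ) (N : ℕ) :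
    wSum w (Sint m (2 * N)) ^ a ≤ 2 * C ^ (1 / p) * wSum w (Sint m N) ^ a := by
  have hC1 := hC.one_le hp hw
  have hpos := wSum_Sint_pos hw m N
  have hdouble : 1 ≤ 2 ^ p * C :=
    one_le_mul_of_one_le_of_one_le (Real.one_le_rpow one_le_two (by positivity)) hC1
  calc wSum w (Sint m (2 * N)) ^ a ≤ (2 ^ p * C * wSum w (Sint m N)) ^ a :=
        Real.rpow_le_rpow (wSum_Sint_pos hw m (2 * N)).le (hC.wSum_Sint_two_mul_le hp hw m N) ha
    _ = (2 ^ p * C) ^ a * wSum w (Sint m N) ^ a := Real.mul_rpow (by positivity) hpos.le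
    _ ≤ (2 ^ p * C) ^ (1 / p) * wSum w (Sint m N) ^ a := by gcongr
    _ = 2 * C ^ (1 / p) * wSum w (Sint m N) ^ a := by
        rw [Real.mul_rpow (by positivity) (by positivity), one_div,
          Real.rpow_rpow_inv two_pos.le (by positivity)]

theorem IsApConst.weightedAvg_one_Sint_le (hC : IsApConst p w C) (hp : 1 < p)
    (hw : ∀ k, 0 < w k) (hx : MemMorrey p q w w x) (m : ℤ) (N : ℕ) :
    weightedAvg 1 x (Sint m N) ≤
      C ^ (1 / p) * morreyNorm p q w w x * wSum w (Sint m N) ^ (-(1 / q)) := by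
  have hw0 k := (hw k).le
  have hp0 : 0 < p := by positivity
  have hC0 : 0 ≤ C := zero_le_one.trans (hC.one_le hp hw)
  have hpos := wSum_Sint_pos hw m N
  have havg : 0 ≤ weightedAvg 1 x (Sint m N) := weightedAvg_nonneg fun _ => zero_le_one
  have hnorm := weightedLpNorm_nonneg (p := p) (f := x) (s := Sint m N) hw0
  have hsum : weightedAvg 1 x (Sint m N) ^ p * wSum w (Sint m N) ≤
      C * weightedLpNorm p w x (Sint m N) ^ p := by
    rw [weightedLpNorm_rpow hp0.ne' hw0]
    exact hC.weightedAvg_one_rpow_mul_sum_le hp hw x (by omega)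
  have hroot : weightedAvg 1 x (Sint m N) * wSum w (Sint m N) ^ (1 / p) ≤
      C ^ (1 / p) * weightedLpNorm p w x (Sint m N) := by
    have h := Real.rpow_le_rpow (by positivity) hsum (one_div_nonneg.2 hp0.le)
    rwa [Real.mul_rpow (by positivity) hpos.le, Real.mul_rpow hC0 (by positivity), one_div,
      Real.rpow_rpow_inv havg hp0.ne', Real.rpow_rpow_inv hnorm hp0.ne', ← one_div] at h
  refine le_of_mul_le_mul_right (hroot.trans ?_) (Real.rpow_pos_of_pos hpos (1 / p))
  rw [mul_assoc _ (_ ^ (-(1 / q))), ← Real.rpow_add hpos, neg_add_eq_sub, mul_assoc]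
  exact mul_le_mul_of_nonneg_left (hx.weightedLpNorm_Sint_le hw m N) (by positivity)

theorem IsApConst.maxHL_le_localMaximal_add (hC : IsApConst p w C) (hp : 1 < p) (hq : 0 ≤ q)
    (hw : ∀ k, 0 < w k) (hx : MemMorrey p q w w x) (hk : k ∈ Sint m N) :
    maxHL x k ≤ localMaximal 1 x (m - (2 * N : ℕ)) (m + (2 * N : ℕ)) k +
      2 * (C ^ (1 / p) * morreyNorm p q w w x * wSum w (Sint m N) ^ (-(1 / q))) := by
  have hC0 : 0 ≤ C := zero_le_one.trans (hC.one_le hp hw)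
  have hν : 0 ≤ morreyNorm p q w w x := morreyNorm_nonneg (fun k => (hw k).le) hw
  refine maxHL_le_localMaximal_add_two_mul hk fun L hL => ?_
  refine (hC.weightedAvg_one_Sint_le hp hw hx m (2 * L)).trans ?_
  refine mul_le_mul_of_nonneg_left ?_ (by positivity)
  exact Real.rpow_le_rpow_of_nonpos (wSum_Sint_pos hw m N)
    (Finset.sum_le_sum_of_subset_of_nonneg (Sint_mono (by omega)) fun k _ _ => (hw k).le)
    (neg_nonpos.2 (one_div_nonneg.2 hq))

theorem IsApConst.weightedLpNorm_localMaximal_one_Sint_le {p' : ℝ} (hC : IsApConst p w C)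
    (hp : p.HolderConjugate p') (hpq : p ≤ q) (hw : ∀ k, 0 < w k) (hx : MemMorrey p q w w x)
    (m : ℤ) (N : ℕ) :
    weightedLpNorm p w (localMaximal 1 x (m - (2 * N : ℕ)) (m + (2 * N : ℕ))) (Sint m (2 * N)) ≤
      (C * (2 * p)) ^ (p - 1)⁻¹ * (2 * p') *
        (2 * C ^ (1 / p) * morreyNorm p q w w x * wSum w (Sint m N) ^ (1 / p - 1 / q)) := by
  have hp0 := hp.pos
  have hp'0 := hp.symm.pos
  have hC0 : 0 ≤ C := zero_le_one.trans (hC.one_le hp.lt hw)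
  have hν : 0 ≤ morreyNorm p q w w x := morreyNorm_nonneg (fun k => (hw k).le) hw
  refine (hC.weightedLpNorm_localMaximal_one_le hp hw x _ _).trans
    (mul_le_mul_of_nonneg_left ?_ (by positivity))
  calc weightedLpNorm p w x (Sint m (2 * N))
      ≤ morreyNorm p q w w x * wSum w (Sint m (2 * N)) ^ (1 / p - 1 / q) :=
        hx.weightedLpNorm_Sint_le hw m (2 * N)
    _ ≤ morreyNorm p q w w x * (2 * C ^ (1 / p) * wSum w (Sint m N) ^ (1 / p - 1 / q)) := by
        gcongr
        exact hC.wSum_Sint_two_mul_rpow_le hp.lt hw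
          (sub_nonneg.2 (one_div_le_one_div_of_le hp0 hpq))
          (sub_le_self _ (one_div_nonneg.2 (hp0.le.trans hpq))) m N
    _ = 2 * C ^ (1 / p) * morreyNorm p q w w x * wSum w (Sint m N) ^ (1 / p - 1 / q) := by ring

theorem IsApConst.weightedLpNorm_maxHL_Sint_le {p' : ℝ} (hC : IsApConst p w C)
    (hp : p.HolderConjugate p') (hpq : p ≤ q) (hw : ∀ k, 0 < w k) (hx : MemMorrey p q w w x)
    (m : ℤ) (N : ℕ) :
    weightedLpNorm p w (maxHL x) (Sint m N) ≤
      2 * C ^ (1 / p) * ((C * (2 * p)) ^ (p - 1)⁻¹ * (2 * p') + 1) * morreyNorm p q w w x *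
        wSum w (Sint m N) ^ (1 / p - 1 / q) := by
  have hw0 k := (hw k).le
  have hp0 := hp.pos
  have hC0 : 0 ≤ C := zero_le_one.trans (hC.one_le hp.lt hw)
  have hν : 0 ≤ morreyNorm p q w w x := morreyNorm_nonneg hw0 hw
  have hpos := wSum_Sint_pos hw m N
  set T := localMaximal 1 x (m - (2 * N : ℕ)) (m + (2 * N : ℕ))
  set c := 2 * (C ^ (1 / p) * morreyNorm p q w w x * wSum w (Sint m N) ^ (-(1 / q))) with hc_def
  have hT : weightedLpNorm p w T (Sint m N) ≤ weightedLpNorm p w T (Sint m (2 * N)) :=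
    weightedLpNorm_mono_set hp0.le hw0 (Sint_mono (by omega))
  have hc : weightedLpNorm p w (fun _ => c) (Sint m N) =
      2 * C ^ (1 / p) * morreyNorm p q w w x * wSum w (Sint m N) ^ (1 / p - 1 / q) := by
    rw [weightedLpNorm_const hp0.ne' hw0, abs_of_nonneg (by positivity), ← wSum,
      ← neg_add_eq_sub (1 / q), Real.rpow_add hpos, hc_def]
    ring
  calc weightedLpNorm p w (maxHL x) (Sint m N)
      ≤ weightedLpNorm p w (fun k => T k + c) (Sint m N) :=
        weightedLpNorm_mono hp0.le hw0 fun k hk => abs_le_abs_of_nonneg (maxHL_nonneg x k)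
          (hC.maxHL_le_localMaximal_add hp.lt (hp0.le.trans hpq) hw hx hk)
    _ ≤ weightedLpNorm p w T (Sint m N) + weightedLpNorm p w (fun _ => c) (Sint m N) :=
        weightedLpNorm_add_le hp.lt.le hw0
    _ ≤ _ := by
        linarith [hC.weightedLpNorm_localMaximal_one_Sint_le hp hpq hw hx m N]

end Morrey

theorem stmt16_general (p q : ℝ) (hp : 1 < p) (hpq : p ≤ q) (w : ℤ → ℝ)
    (hw : ∀ k, 0 < w k) (hAp : discreteAp p w) :
    ∃ C > 0, ∀ x : ℤ → ℝ, MemMorrey p q w w x →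
      MemMorrey p q w w (maxHL x) ∧
        morreyNorm p q w w (maxHL x) ≤ C * morreyNorm p q w w x := by
  obtain ⟨C, hC⟩ := (discreteAp_iff_exists_isApConst hw).1 hAp
  have hC0 : 0 < C := zero_lt_one.trans_le (hC.one_le hp hw)
  have hp' : p.HolderConjugate p.conjExponent := .conjExponent hp
  have hp'0 := hp'.symm.pos
  refine ⟨2 * C ^ (1 / p) * ((C * (2 * p)) ^ (p - 1)⁻¹ * (2 * p.conjExponent) + 1),
    by positivity, fun x hx => ?_⟩
  have hball := hC.weightedLpNorm_maxHL_Sint_le hp' hpq hw hx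
  exact ⟨memMorrey_of_le hw hball, morreyNorm_le hw hball⟩

/-- if `w ∈ A_p(ℤ)` with `1 < p < q`, then the discrete Hardy–Littlewood
maximal operator is bounded on the discrete weighted Morrey space `l^p_q(w)`. -/
theorem stmt16 (p q : ℝ) (hp : 1 < p) (hpq : p < q) (w : ℤ → ℝ)
    (hw : ∀ k, 0 < w k) (hAp : discreteAp p w) :
    ∃ C > 0, ∀ x : ℤ → ℝ,
      BddAbove (Set.range fun mN : ℤ × ℕ =>
        (wSum w (Sint mN.1 mN.2)) ^ (1/q - 1/p) *
          (∑ k ∈ Sint mN.1 mN.2, |x k| ^ p * w k) ^ (1/p)) →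
      morreyNorm p q w w (maxHL x) ≤ C * morreyNorm p q w w x := by
  obtain ⟨C, hC, h⟩ := stmt16_general p q hp hpq.le w hw hAp
  exact ⟨C, hC, fun x hx => (h x hx).2⟩
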